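/- (Bound on the controlled-ODE solution.) Let μ₁,…,μ_d be finite signed measures on (0, T], let υ = Σ_{i=1}^d |μ_i| be the sum of their total-variation measures, and set B_υ = υ((0,T]). Let V_i : (0,T] × ℝ^ℓ → ℝ^ℓ be measurable functions satisfying ‖V_i(s, y)‖ ≤ B_V(1 + ‖y‖) for all i, s, y. Suppose X : [0, T] → ℝ^ℓ is a càdlàg (right-continuous with left limits) function satisfying X(t) = x + Σ_{i=1}^d ∫_{(0,t]} V_i(s, X(s⁻)) dμ_i(s) for all 0 ≤ t ≤ T, where X(s⁻) denotes the left limit. Then for all 0 ≤ t ≤ T: ‖X(t)‖ ≤ (‖x‖ + B_V B_υ)·exp(B_V B_υ). -/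

import Mathlib

open MeasureTheory
open scoped BigOperators

/-- Euclidean norm of a vector in ℝ^ℓ (Frobenius-type norm). -/
noncomputable def vnorm {ℓ : ℕ} (v : Fin ℓ → ℝ) : ℝ := Real.sqrt (∑ i, (v i) ^ 2)

/-- Integral of a vector-valued function against a finite signed measure, defined via the
Jordan decomposition. -/
noncomputable def signedIntegral {E : Type*} [NormedAddCommGroup E] [NormedSpace ℝ E]
    [CompleteSpace E] (μ : SignedMeasure ℝ) (s : Set ℝ) (f : ℝ → E) : E :=
  (∫ t in s, f t ∂μ.toJordanDecomposition.posPart) -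
    ∫ t in s, f t ∂μ.toJordanDecomposition.negPart

/-!
Let `ν = ∑ᵢ ‖Vᵢ(s, X(s⁻))‖ |μᵢ|(ds)` on `(0, t]`. The equation gives `‖X(s⁻)‖ ≤ ‖x‖ + ν (0, s)`, so
that `ν(ds) ≤ B_V (1 + ‖x‖ + ν (0, s)) υ(ds)` by linear growth. A lower bound for the integral of
`1 / (A + ν (0, s))` against `ν` is what replaces the chain rule for `log` in the presence of atoms:
`log ((A + ν (0, t]) / A) ≤ ∫ ν(ds) / (A + ν (0, s)) ≤ B_V υ (0, t]` with `A = 1 + ‖x‖`.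
-/

section Gronwall

open Set
open scoped ENNReal

variable {α : Type*} [LinearOrder α] [TopologicalSpace α] [SecondCountableTopology α]

theorem exists_countable_compl_eq_biInter_Iic [OrderClosedTopology α] {U : Set α}
    (hU : IsUpperSet U) (hleast : ¬∃ s, IsLeast U s) :
    ∃ D ⊆ U, D.Countable ∧ Uᶜ = ⋂ s ∈ D, Iic s := by
  obtain ⟨D, hDU, hD, hcover⟩ :=
    TopologicalSpace.isOpen_biUnion_countable U Ioi fun _ _ ↦ isOpen_Ioi
  refine ⟨D, hDU, hD, ?_⟩
  rw [← compl_inj_iff, compl_compl]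
  simp only [compl_iInter, compl_Iic, hcover]
  ext s
  simp only [mem_iUnion, mem_Ioi, exists_prop]
  refine ⟨fun hs ↦ ?_, fun ⟨u, hu, hus⟩ ↦ hU hus.le hu⟩
  by_contra! hmin
  exact hleast ⟨s, hs, hmin⟩

variable [MeasurableSpace α]

theorem le_measure_setOf_measure_Iio_le [OrderClosedTopology α] [OpensMeasurableSpace α]
    (ν : Measure α) [IsFiniteMeasure ν] {r : ℝ≥0∞} (hr : r ≤ ν univ) :
    r ≤ ν {s | ν (Iio s) ≤ r} := by
  set U : Set α := {s | r < ν (Iio s)}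
  rw [show {s | ν (Iio s) ≤ r} = Uᶜ by ext; simp [U]]
  have hU : IsUpperSet U := fun s t hst hs ↦
    lt_of_lt_of_le hs (measure_mono (Iio_subset_Iio hst))
  by_cases hleast : ∃ s₀, IsLeast U s₀
  · obtain ⟨s₀, hs₀⟩ := hleast
    exact hs₀.1.le.trans (measure_mono fun s hs hsU ↦ (hs₀.2 hsU).not_gt hs)
  obtain ⟨D, hDU, hD, hcompl⟩ := exists_countable_compl_eq_biInter_Iic hU hleast
  rcases D.eq_empty_or_nonempty with rfl | hDne
  · simpa [hcompl] using hr
  have := hD.to_subtype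
  have hmono : Monotone fun s : D ↦ Iic (s : α) := fun s t hst ↦ Iic_subset_Iic.2 hst
  rw [hcompl, biInter_eq_iInter, hmono.measure_iInter (fun _ ↦ measurableSet_Iic.nullMeasurableSet)
    ⟨⟨_, hDne.some_mem⟩, measure_ne_top _ _⟩]
  exact le_iInf fun s ↦ (hDU s.2).le.trans (measure_mono Iio_subset_Iic_self)

theorem setLIntegral_Ioc_le_lintegral_comp_measureReal_Iio [OrderTopology α] [BorelSpace α]
    (ν : Measure α) [IsFiniteMeasure ν] {φ : ℝ → ℝ} (hφ : AntitoneOn φ (Ici 0))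
    (hφ_nonneg : ∀ r, 0 ≤ r → 0 ≤ φ r) :
    ∫⁻ r in Ioc 0 (ν.real univ), ENNReal.ofReal (φ r) ≤
      ∫⁻ s, ENNReal.ofReal (φ (ν.real (Iio s))) ∂ν := by
  have hcomp : Antitone fun s ↦ φ (ν.real (Iio s)) := fun s t hst ↦
    hφ measureReal_nonneg measureReal_nonneg (measureReal_mono (Iio_subset_Iio hst))
  have hφ_meas : AEMeasurable φ (volume.restrict (Ioc 0 (ν.real univ))) :=
    aemeasurable_restrict_of_antitoneOn measurableSet_Ioc
      (hφ.mono (Ioc_subset_Ioi_self.trans Ioi_subset_Ici_self))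
  have hφ_ae : 0 ≤ᵐ[volume.restrict (Ioc 0 (ν.real univ))] φ :=
    (ae_restrict_mem measurableSet_Ioc).mono fun r hr ↦ hφ_nonneg r hr.1.le
  rw [lintegral_eq_lintegral_meas_le _ hφ_ae hφ_meas, lintegral_eq_lintegral_meas_le _
    (.of_forall fun s ↦ hφ_nonneg _ measureReal_nonneg) hcomp.measurable.aemeasurable]
  -- After the layer-cake formula it suffices to compare the superlevel sets `{c ≤ φ}`, and these
  -- contain `[0, r]` along with `r`.
  refine lintegral_mono fun c ↦ ?_
  rw [Measure.restrict_apply' measurableSet_Ioc]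
  have hsub : {r | c ≤ φ r} ∩ Ioc 0 (ν.real univ) ⊆
      Ioc 0 (ν.real {s | c ≤ φ (ν.real (Iio s))}) := by
    rintro r ⟨hcr, hr0, hr⟩
    refine ⟨hr0, (ENNReal.ofReal_le_iff_le_toReal (measure_ne_top _ _)).1 ?_⟩
    refine (le_measure_setOf_measure_Iio_le ν
      ((ENNReal.ofReal_le_iff_le_toReal (measure_ne_top _ _)).2 hr)).trans
      (measure_mono fun s hs ↦ ?_)
    exact hcr.trans <| hφ measureReal_nonneg hr0.le (ENNReal.toReal_le_of_le_ofReal hr0.le hs)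
  refine (measure_mono hsub).trans_eq ?_
  rw [Real.volume_Ioc, sub_zero, ofReal_measureReal]

theorem ofReal_log_le_lintegral_inv_add_measureReal_Iio [OrderTopology α] [BorelSpace α]
    (ν : Measure α) [IsFiniteMeasure ν] {A : ℝ} (hA : 0 < A) :
    ENNReal.ofReal (Real.log ((A + ν.real univ) / A)) ≤
      ∫⁻ s, ENNReal.ofReal (A + ν.real (Iio s))⁻¹ ∂ν := by
  have hm : 0 ≤ ν.real univ := measureReal_nonneg
  have hinv_anti : AntitoneOn (fun r : ℝ ↦ (A + r)⁻¹) (Ici 0) := fun r hr u _ hru ↦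
    inv_anti₀ (add_pos_of_pos_of_nonneg hA hr) (by gcongr)
  have hinv_nonneg (r : ℝ) (hr : 0 ≤ r) : 0 ≤ (A + r)⁻¹ := by positivity
  have hlog : Real.log ((A + ν.real univ) / A) = ∫ r in Ioc 0 (ν.real univ), (A + r)⁻¹ := by
    rw [← intervalIntegral.integral_of_le hm,
      intervalIntegral.integral_comp_add_left (fun r ↦ r⁻¹), add_zero,
      integral_inv_of_pos hA (by positivity)]
  have hint : IntegrableOn (fun r : ℝ ↦ (A + r)⁻¹) (Ioc 0 (ν.real univ)) :=
    ((hinv_anti.mono Icc_subset_Ici_self).integrableOn_isCompact isCompact_Icc).mono_set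
      Ioc_subset_Icc_self
  rw [hlog, ofReal_integral_eq_lintegral_ofReal hint
    ((ae_restrict_mem measurableSet_Ioc).mono fun r hr ↦ hinv_nonneg r hr.1.le)]
  exact setLIntegral_Ioc_le_lintegral_comp_measureReal_Iio ν hinv_anti hinv_nonneg

theorem add_measureReal_univ_le_mul_exp_of_le_withDensity [OrderTopology α] [BorelSpace α]
    {ν υ : Measure α} [IsFiniteMeasure ν] [IsFiniteMeasure υ] {A B : ℝ} (hA : 0 < A) (hB : 0 ≤ B)
    (h : ν ≤ υ.withDensity fun s ↦ ENNReal.ofReal (B * (A + ν.real (Iio s)))) :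
    A + ν.real univ ≤ A * Real.exp (B * υ.real univ) := by
  have hG (s : α) : 0 < A + ν.real (Iio s) := add_pos_of_pos_of_nonneg hA measureReal_nonneg
  have hG_mono : Monotone fun s ↦ A + ν.real (Iio s) := fun s t hst ↦
    add_le_add_right (measureReal_mono (Iio_subset_Iio hst)) A
  have hlog : ENNReal.ofReal (Real.log ((A + ν.real univ) / A)) ≤
      ENNReal.ofReal (B * υ.real univ) := calc
    _ ≤ ∫⁻ s, ENNReal.ofReal (A + ν.real (Iio s))⁻¹ ∂ν :=
      ofReal_log_le_lintegral_inv_add_measureReal_Iio ν hA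
    _ ≤ ∫⁻ s, ENNReal.ofReal (A + ν.real (Iio s))⁻¹
          ∂υ.withDensity fun s ↦ ENNReal.ofReal (B * (A + ν.real (Iio s))) :=
      lintegral_mono' h le_rfl
    _ = ∫⁻ _, ENNReal.ofReal B ∂υ := by
      have hG_inv : Measurable fun s ↦ (A + ν.real (Iio s))⁻¹ := hG_mono.measurable.inv
      rw [lintegral_withDensity_eq_lintegral_mul _
        (hG_mono.measurable.const_mul B).ennreal_ofReal hG_inv.ennreal_ofReal]
      refine lintegral_congr fun s ↦ ?_
      rw [Pi.mul_apply, ← ENNReal.ofReal_mul (mul_nonneg hB (hG s).le),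
        mul_inv_cancel_right₀ (hG s).ne']
    _ = ENNReal.ofReal (B * υ.real univ) := by
      rw [lintegral_const, ENNReal.ofReal_mul hB, ofReal_measureReal]
  rw [ENNReal.ofReal_le_ofReal_iff (mul_nonneg hB measureReal_nonneg),
    Real.log_le_iff_le_exp (div_pos (add_pos_of_pos_of_nonneg hA measureReal_nonneg) hA),
    div_le_iff₀' hA] at hlog
  exact hlog

theorem add_measureReal_Ioc_le_mul_exp_of_restrict_le_withDensity [OrderTopology α] [BorelSpace α]
    {ν υ : Measure α} {a b : α} (hν : ν (Ioc a b) < ∞) (hυ : υ (Ioc a b) < ∞) {A B : ℝ}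
    (hA : 0 < A) (hB : 0 ≤ B)
    (h : ν.restrict (Ioc a b) ≤
      (υ.restrict (Ioc a b)).withDensity fun s ↦ ENNReal.ofReal (B * (A + ν.real (Ioo a s)))) :
    A + ν.real (Ioc a b) ≤ A * Real.exp (B * υ.real (Ioc a b)) := by
  have : IsFiniteMeasure (ν.restrict (Ioc a b)) := isFiniteMeasure_restrict.2 hν.ne
  have : IsFiniteMeasure (υ.restrict (Ioc a b)) := isFiniteMeasure_restrict.2 hυ.ne
  have hIio : ∀ s ∈ Ioc a b, (ν.restrict (Ioc a b)).real (Iio s) = ν.real (Ioo a s) := by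
    intro s hs
    rw [measureReal_restrict_apply measurableSet_Iio]
    congr 1
    ext u
    exact ⟨fun hu ↦ ⟨hu.2.1, hu.1⟩, fun hu ↦ ⟨hu.2, hu.1, hu.2.le.trans hs.2⟩⟩
  have hdensity : (υ.restrict (Ioc a b)).withDensity
        (fun s ↦ ENNReal.ofReal (B * (A + ν.real (Ioo a s)))) =
      (υ.restrict (Ioc a b)).withDensity
        fun s ↦ ENNReal.ofReal (B * (A + (ν.restrict (Ioc a b)).real (Iio s))) :=
    withDensity_congr_ae <| (ae_restrict_mem measurableSet_Ioc).mono fun s hs ↦ by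
      simp only [hIio s hs]
  simpa only [measureReal_restrict_apply_univ] using
    add_measureReal_univ_le_mul_exp_of_le_withDensity hA hB (h.trans_eq hdensity)

end Gronwall

theorem one_add_mul_exp_sub_one_le (a b : ℝ) :
    (1 + a) * Real.exp b - 1 ≤ (a + b) * Real.exp b := by
  have h : (1 - b) * Real.exp b ≤ 1 := calc
    (1 - b) * Real.exp b ≤ Real.exp (-b) * Real.exp b := by
      gcongr
      exact Real.one_sub_le_exp_neg b
    _ = 1 := by rw [← Real.exp_add, neg_add_cancel, Real.exp_zero]
  linarith

section SignedIntegral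

open Set
open scoped ENNReal

variable {ι E F α : Type*} [Fintype ι] [NormedAddCommGroup E] [NormedAddCommGroup F]
  [MeasurableSpace α]

/-- The measure `∑ᵢ ‖fᵢ‖ |μᵢ|`, which dominates the vector measure `∑ᵢ fᵢ dμᵢ`. -/
noncomputable def dominatingMeasure (μ : ι → SignedMeasure α) (f : ι → α → E) : Measure α :=
  ∑ i, (μ i).totalVariation.withDensity fun s ↦ ‖f i s‖ₑ

section Measure

variable {μ : ι → SignedMeasure α} {f : ι → α → E} {S : Set α}

theorem dominatingMeasure_apply (hS : MeasurableSet S) :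
    dominatingMeasure μ f S = ∑ i, ∫⁻ s in S, ‖f i s‖ₑ ∂(μ i).totalVariation := by
  simp only [dominatingMeasure, Measure.finsetSum_apply, withDensity_apply _ hS]

theorem dominatingMeasure_lt_top (hS : MeasurableSet S)
    (hf : ∀ i, IntegrableOn (f i) S (μ i).totalVariation) : dominatingMeasure μ f S < ∞ := by
  rw [dominatingMeasure_apply hS]
  exact ENNReal.sum_lt_top.2 fun i _ ↦ (hf i).2

theorem restrict_dominatingMeasure_le_withDensity (hS : MeasurableSet S) {c : α → ℝ≥0∞}
    (hc : ∀ i, ∀ s ∈ S, ‖f i s‖ₑ ≤ c s) :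
    (dominatingMeasure μ f).restrict S ≤
      ((∑ i, (μ i).totalVariation).restrict S).withDensity c := by
  refine Measure.le_iff.2 fun R hR ↦ ?_
  rw [Measure.restrict_apply hR, dominatingMeasure_apply (hR.inter hS), withDensity_apply _ hR,
    Measure.restrict_restrict hR, ← Measure.sum_fintype, Measure.restrict_sum _ (hR.inter hS),
    lintegral_sum_measure, tsum_fintype]
  exact Finset.sum_le_sum fun i _ ↦ setLIntegral_mono' (hR.inter hS) fun s hs ↦ hc i s hs.2

theorem add_measureReal_dominatingMeasure_le_mul_exp [LinearOrder α] [TopologicalSpace α]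
    [OrderTopology α] [SecondCountableTopology α] [BorelSpace α] {a b : α} {A B : ℝ}
    (hA : 0 < A) (hB : 0 ≤ B) (hf : ∀ i, IntegrableOn (f i) (Ioc a b) (μ i).totalVariation)
    (h : ∀ i, ∀ s ∈ Ioc a b, ‖f i s‖ ≤ B * (A + (dominatingMeasure μ f).real (Ioo a s))) :
    A + (dominatingMeasure μ f).real (Ioc a b) ≤
      A * Real.exp (B * (∑ i, (μ i).totalVariation).real (Ioc a b)) := by
  refine add_measureReal_Ioc_le_mul_exp_of_restrict_le_withDensity
    (dominatingMeasure_lt_top measurableSet_Ioc hf) (measure_lt_top _ _) hA hB ?_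
  refine restrict_dominatingMeasure_le_withDensity measurableSet_Ioc fun i s hs ↦ ?_
  rw [← ofReal_norm]
  exact ENNReal.ofReal_le_ofReal (h i s hs)

end Measure

variable [NormedSpace ℝ E] [CompleteSpace E] [NormedSpace ℝ F] [CompleteSpace F]
  {μ : ι → SignedMeasure ℝ} {f : ι → ℝ → E} {S : Set ℝ}

theorem map_signedIntegral (e : E ≃L[ℝ] F) (μ : SignedMeasure ℝ) (s : Set ℝ)
    (f : ℝ → E) : e (signedIntegral μ s f) = signedIntegral μ s fun t ↦ e (f t) := by
  simp only [signedIntegral, map_sub, e.integral_comp_comm]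

theorem enorm_signedIntegral_le (μ : SignedMeasure ℝ) (s : Set ℝ) (f : ℝ → E) :
    ‖signedIntegral μ s f‖ₑ ≤ ∫⁻ t in s, ‖f t‖ₑ ∂μ.totalVariation := by
  rw [signedIntegral, SignedMeasure.totalVariation, Measure.restrict_add, lintegral_add_measure]
  exact enorm_sub_le.trans <|
    add_le_add (enorm_integral_le_lintegral_enorm _) (enorm_integral_le_lintegral_enorm _)

theorem enorm_sum_signedIntegral_le (hS : MeasurableSet S) :
    ‖∑ i, signedIntegral (μ i) S (f i)‖ₑ ≤ dominatingMeasure μ f S := by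
  rw [dominatingMeasure_apply hS]
  exact (enorm_sum_le _ _).trans (Finset.sum_le_sum fun i _ ↦ enorm_signedIntegral_le _ _ _)

theorem norm_add_sum_signedIntegral_le (hS : MeasurableSet S)
    (hf : ∀ i, IntegrableOn (f i) S (μ i).totalVariation) (x : E) :
    ‖x + ∑ i, signedIntegral (μ i) S (f i)‖ ≤ ‖x‖ + (dominatingMeasure μ f).real S := by
  refine (norm_add_le _ _).trans (add_le_add_right ?_ _)
  rw [← toReal_enorm]
  exact ENNReal.toReal_mono (dominatingMeasure_lt_top hS hf).ne (enorm_sum_signedIntegral_le hS)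

end SignedIntegral

section Solution

open Set Filter
open scoped Topology ENNReal

theorem norm_le_add_measureReal_Ioo_of_tendsto_nhdsLT {α E : Type*} [LinearOrder α]
    [TopologicalSpace α] [OrderTopology α] [DenselyOrdered α] [MeasurableSpace α]
    [NormedAddCommGroup E] {ν : Measure α} {X : α → E} {y : E} {a b : α} {C : ℝ} (hab : a < b)
    (hν : ν (Ioo a b) < ∞) (hX : ∀ s ∈ Ioo a b, ‖X s‖ ≤ C + ν.real (Ioc a s))
    (hy : Tendsto X (𝓝[<] b) (𝓝 y)) :
    ‖y‖ ≤ C + ν.real (Ioo a b) := by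
  have : (𝓝[<] b).NeBot := nhdsLT_neBot_of_exists_lt ⟨a, hab⟩
  refine le_of_tendsto hy.norm ?_
  filter_upwards [Ioo_mem_nhdsLT hab] with s hs
  exact (hX s hs).trans <| add_le_add_right
    (measureReal_mono (Ioc_subset_Ioo_right hs.2) hν.ne) C

theorem vnorm_eq_norm_toLp {ℓ : ℕ} (v : Fin ℓ → ℝ) : vnorm v = ‖WithLp.toLp 2 v‖ := by
  simp [vnorm, EuclideanSpace.norm_eq]

theorem statement15_general {ι E : Type*} [Fintype ι] [NormedAddCommGroup E] [NormedSpace ℝ E]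
    [CompleteSpace E] {T : ℝ} {μ : ι → SignedMeasure ℝ} {V : ι → ℝ → E → E} {BV : ℝ}
    {x : E} {X Xm : ℝ → E}
    (hV : ∀ i s y, ‖V i s y‖ ≤ BV * (1 + ‖y‖))
    (hleftlim : ∀ t ∈ Ioc 0 T, Tendsto X (𝓝[<] t) (𝓝 (Xm t)))
    (hint : ∀ i, IntegrableOn (fun s ↦ V i s (Xm s)) (Ioc 0 T) (μ i).totalVariation)
    (heq : ∀ t ∈ Icc 0 T,
      X t = x + ∑ i, signedIntegral (μ i) (Ioc 0 t) fun s ↦ V i s (Xm s)) :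
    ∀ t ∈ Icc 0 T, ‖X t‖ ≤ (‖x‖ + BV * (∑ i, (μ i).totalVariation).real (Ioc 0 T)) *
      Real.exp (BV * (∑ i, (μ i).totalVariation).real (Ioc 0 T)) := by
  intro t ht
  rcases isEmpty_or_nonempty ι with _ | ⟨⟨i₀⟩⟩
  · simp [heq t ht]
  have hBV : 0 ≤ BV := by simpa using (norm_nonneg _).trans (hV i₀ 0 0)
  set υ := ∑ i, (μ i).totalVariation
  set ν := dominatingMeasure μ fun i s ↦ V i s (Xm s)
  have hν {S : Set ℝ} (hS : S ⊆ Ioc 0 T) : ν S < ∞ :=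
    (measure_mono hS).trans_lt (dominatingMeasure_lt_top measurableSet_Ioc hint)
  have hX : ∀ s ∈ Icc 0 T, ‖X s‖ ≤ ‖x‖ + ν.real (Ioc 0 s) := fun s hs ↦ by
    rw [heq s hs]
    exact norm_add_sum_signedIntegral_le measurableSet_Ioc
      (fun i ↦ (hint i).mono_set (Ioc_subset_Ioc_right hs.2)) x
  have hXm : ∀ s ∈ Ioc 0 T, ‖Xm s‖ ≤ ‖x‖ + ν.real (Ioo 0 s) := fun s hs ↦
    norm_le_add_measureReal_Ioo_of_tendsto_nhdsLT hs.1
      (hν (Ioo_subset_Ioc_self.trans (Ioc_subset_Ioc_right hs.2)))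
      (fun u hu ↦ hX u ⟨hu.1.le, hu.2.le.trans hs.2⟩) (hleftlim s hs)
  have hgrowth (i : ι) (s : ℝ) (hs : s ∈ Ioc 0 t) :
      ‖V i s (Xm s)‖ ≤ BV * (1 + ‖x‖ + ν.real (Ioo 0 s)) := by
    rw [add_assoc]
    refine (hV i s _).trans ?_
    gcongr
    exact hXm s ⟨hs.1, hs.2.trans ht.2⟩
  have hgronwall : 1 + ‖x‖ + ν.real (Ioc 0 t) ≤
      (1 + ‖x‖) * Real.exp (BV * υ.real (Ioc 0 t)) :=
    add_measureReal_dominatingMeasure_le_mul_exp (by positivity) hBV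
      (fun i ↦ (hint i).mono_set (Ioc_subset_Ioc_right ht.2)) hgrowth
  calc ‖X t‖ ≤ (1 + ‖x‖) * Real.exp (BV * υ.real (Ioc 0 t)) - 1 := by linarith [hX t ht]
    _ ≤ (‖x‖ + BV * υ.real (Ioc 0 t)) * Real.exp (BV * υ.real (Ioc 0 t)) :=
      one_add_mul_exp_sub_one_le _ _
    _ ≤ (‖x‖ + BV * υ.real (Ioc 0 T)) * Real.exp (BV * υ.real (Ioc 0 T)) := by
      have hυ : υ.real (Ioc 0 t) ≤ υ.real (Ioc 0 T) :=
        measureReal_mono (Ioc_subset_Ioc_right ht.2)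
      gcongr

end Solution

/-- bound on the controlled-ODE solution: if the càdlàg function X solves
X(t) = x + Σᵢ ∫_{(0,t]} Vᵢ(s, X(s⁻)) dμᵢ(s) with ‖Vᵢ(s,y)‖ ≤ B_V(1 + ‖y‖), then
‖X(t)‖ ≤ (‖x‖ + B_V·B_υ)·exp(B_V·B_υ), where B_υ = (Σᵢ|μᵢ|)((0,T]). -/
theorem statement15 {d ℓ : ℕ} (T : ℝ) (hT : 0 < T)
    (μ : Fin d → SignedMeasure ℝ)
    (V : Fin d → ℝ → (Fin ℓ → ℝ) → Fin ℓ → ℝ) (BV : ℝ)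
    (x : Fin ℓ → ℝ) (X Xm : ℝ → Fin ℓ → ℝ)
    (Bυ : ℝ) (hBυ : Bυ = ((∑ i, (μ i).totalVariation) (Set.Ioc 0 T)).toReal)
    (hV : ∀ i s y, vnorm (V i s y) ≤ BV * (1 + vnorm y))
    (hVmeas : ∀ i, Measurable (fun p : ℝ × (Fin ℓ → ℝ) => V i p.1 p.2))
    (hrightcont : ∀ t ∈ Set.Icc (0 : ℝ) T, ContinuousWithinAt X (Set.Ici t) t)
    (hleftlim : ∀ t ∈ Set.Ioc (0 : ℝ) T,
      Filter.Tendsto X (nhdsWithin t (Set.Iio t)) (nhds (Xm t)))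
    (hint : ∀ i, IntegrableOn (fun s => V i s (Xm s)) (Set.Ioc 0 T) (μ i).totalVariation)
    (heq : ∀ t ∈ Set.Icc (0 : ℝ) T,
      X t = x + ∑ i, signedIntegral (μ i) (Set.Ioc 0 t) fun s => V i s (Xm s)) :
    ∀ t ∈ Set.Icc (0 : ℝ) T, vnorm (X t) ≤ (vnorm x + BV * Bυ) * Real.exp (BV * Bυ) := by
  subst hBυ
  let e := (EuclideanSpace.equiv (Fin ℓ) ℝ).symm
  have heq_toLp (t : ℝ) (ht : t ∈ Set.Icc 0 T) : e (X t) =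
      e x + ∑ i, signedIntegral (μ i) (Set.Ioc 0 t) fun s ↦ e (V i s (e.symm (e (Xm s)))) := by
    simp only [heq t ht, map_add, map_sum, map_signedIntegral, e.symm_apply_apply]
  simp only [vnorm_eq_norm_toLp] at hV ⊢
  exact statement15_general (V := fun i s y ↦ e (V i s (e.symm y)))
    (fun i s y ↦ hV i s (e.symm y)) (fun t ht ↦ (e.continuous.tendsto _).comp (hleftlim t ht))
    (fun i ↦ e.toContinuousLinearMap.integrable_comp (hint i)) heq_toLp
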